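/- Let a, b ∈ ℂ \ {0}, γ ∈ ℂ with Re(γ) > 0, and let k be an integer with k ≥ 1 and k = ⌊Re(γ)⌋ or k = ⌈Re(γ)⌉. Define, for a Schwartz function ψ, the adjoint derivative (D*ψ)(x) = (1/(2π)) ∫_ℝ ψ̂(ω) h_{a,b}^γ(−ω) e^{iωx} dω. Then for all Schwartz functions φ, ψ : ℝ → ℂ one has ∫_ℝ (I_{a,b}^{γ;k} φ)(x) · (D*ψ)(x) dx = ∫_ℝ φ(x) ψ(x) dx (both integrals being absolutely convergent); this is the weak form of the statement that I_{a,b}^{γ;k} is a right-inverse of D_{a,b}^γ. -/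

import Mathlib

/-!
Write `σ = Re γ`. Formally, Fubini turns the pairing of `I φ` with `D^*ψ` into
`(2π)⁻¹ ∫ φ̂(ω) / h(ω) · (∫ (e^{iωx} - ∑_{j<k} (iωx)^j / j!) D^*ψ(x) dx) dω`. The symbol
`ψ̂(ω) h(-ω)` of `D^*ψ` is `O(|ω|^σ)`, so the moments of `D^*ψ` of order `j ≤ k - 1 < σ` vanish
(`integral_mul_expRem`); the inner integral is therefore `ψ̂(-ω) h(ω)` by Fourier inversion
(`FT_inverse`), the factors `h` cancel, and Parseval's identity (`FT_parseval`) concludes.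

What needs care is absolute convergence. Only `k - 1 < σ < k + 1` is used of `k`, which allows an
exponent `s` with `max (k - 1) (σ - 1) < s < min k σ`. The Taylor remainder is `O(|ωx|^s)`
(`norm_expRem_le_rpow`), so the double integrand is dominated by
`(|φ̂(ω)| |ω|^{s-σ}) (|x|^s |D^*ψ(x)|)`. The first factor is integrable since `s - σ > -1`; the second
requires `D^*ψ = O(|x|^{-t})` for some `t > s + 1`. This decay holds for every `t < σ + 1`
(`Dstar_decay`, from `halfInt_decay`): integrating `∫_0^∞ g(ω) ω^γ e^{iωx} dω` by parts gains a power
of `|x|` while `σ > 0`, and a last integration by parts with the primitive `(e^{iωx} - 1) / (ix)`,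
which is `O(|x|^{-τ} ω^{1-τ})` for `0 ≤ τ ≤ 1`, gains the remaining fractional power.
-/

open MeasureTheory Complex

/-- The homogeneous Fourier multiplier `h_{a,b}^γ`. -/
noncomputable def hab (a b γ : ℂ) (ω : ℝ) : ℂ :=
  if 0 < ω then a * (ω : ℂ) ^ γ
  else if ω < 0 then b * ((-ω : ℝ) : ℂ) ^ γ
  else 0

/-- The Fourier transform `φ̂(ω) = ∫ φ(x) e^{-iωx} dx`. -/
noncomputable def FT (φ : ℝ → ℂ) (ω : ℝ) : ℂ :=
  ∫ x : ℝ, φ x * Complex.exp (-(Complex.I * (ω : ℂ) * (x : ℂ)))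

/-- The complex-order derivative `D_{a,b}^γ`. -/
noncomputable def Dop (a b γ : ℂ) (φ : ℝ → ℂ) (x : ℝ) : ℂ :=
  (1 / (2 * (Real.pi : ℂ))) *
    ∫ ω : ℝ, FT φ ω * hab a b γ ω * Complex.exp (Complex.I * (ω : ℂ) * (x : ℂ))

/-- The complex-order integration operator `I_{a,b}^{γ;k}`. -/
noncomputable def Iop (a b γ : ℂ) (k : ℕ) (φ : ℝ → ℂ) (x : ℝ) : ℂ :=
  (1 / (2 * (Real.pi : ℂ))) *
    ∫ ω : ℝ, FT φ ω *
      ((Complex.exp (Complex.I * (ω : ℂ) * (x : ℂ)) -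
        ∑ j ∈ Finset.range k, (Complex.I * (x : ℂ)) ^ j * (ω : ℂ) ^ j / (j.factorial : ℂ)) /
        hab a b γ ω)

/-- The adjoint integration operator `I_{a,b}^{(γ;k)*}`. -/
noncomputable def Istar (a b γ : ℂ) (k : ℕ) (φ : ℝ → ℂ) (x : ℝ) : ℂ :=
  (1 / (2 * (Real.pi : ℂ))) *
    ∫ ω : ℝ,
      (FT φ ω - ∑ j ∈ Finset.range k, iteratedDeriv j (FT φ) 0 * (ω : ℂ) ^ j / (j.factorial : ℂ)) /
        hab a b γ (-ω) * Complex.exp (Complex.I * (ω : ℂ) * (x : ℂ))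

/-- The adjoint derivative operator `D^*`, with frequency response `h_{a,b}^γ(-ω)`. -/
noncomputable def Dstar (a b γ : ℂ) (ψ : ℝ → ℂ) (x : ℝ) : ℂ :=
  (1 / (2 * (Real.pi : ℂ))) *
    ∫ ω : ℝ, FT ψ ω * hab a b γ (-ω) * Complex.exp (Complex.I * (ω : ℂ) * (x : ℂ))

/-! ### Taylor remainders of the exponential -/

section


/-- The remainder `e^{iy} - ∑_{j<k} (iy)^j / j!`. -/
noncomputable def expRem (k : ℕ) (y : ℝ) : ℂ :=
  Complex.exp (I * (y : ℂ)) - ∑ j ∈ Finset.range k, (I * (y : ℂ)) ^ j / (j.factorial : ℂ)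

lemma expRem_succ (k : ℕ) (y : ℝ) :
    expRem (k + 1) y = expRem k y - (I * (y : ℂ)) ^ k / (k.factorial : ℂ) := by
  simp only [expRem, Finset.sum_range_succ]; ring

lemma expRem_zero_right (k : ℕ) : expRem (k + 1) 0 = 0 := by
  simp [expRem, Finset.sum_range_succ']

lemma hasDerivAt_expRem (k : ℕ) (y : ℝ) :
    HasDerivAt (expRem (k + 1)) (I * expRem k y) y := by
  have h0 : HasDerivAt (fun y : ℝ => I * (y : ℂ)) I y := by
    simpa using (hasDerivAt_id y).ofReal_comp.const_mul I
  induction k with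
  | zero =>
    have := h0.cexp.sub_const (1 : ℂ)
    convert! this using 1
    · funext z; simp [expRem]
    · simp [expRem]; ring
  | succ k ih =>
    have h1 := ih.sub ((h0.pow (k + 1)).div_const (((k + 1).factorial : ℕ) : ℂ))
    convert! h1 using 1
    · funext z
      rw [expRem_succ (k + 1)]; rfl
    · rw [expRem_succ k]
      have h2 : ((k.factorial : ℕ) : ℂ) ≠ 0 := by exact_mod_cast k.factorial_ne_zero
      have h3 : ((k : ℂ) + 1) ≠ 0 := by exact_mod_cast k.succ_ne_zero
      rw [Nat.factorial_succ]
      push_cast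
      field_simp

lemma norm_expRem_le_pow (k : ℕ) (y : ℝ) : ‖expRem k y‖ ≤ |y| ^ k := by
  induction k generalizing y with
  | zero => simp [expRem, mul_comm I, Complex.norm_exp_ofReal_mul_I]
  | succ k ih =>
    have := Convex.norm_image_sub_le_of_norm_hasDerivWithin_le (f := expRem (k + 1))
      (f' := fun z => I * expRem k z) (s := Set.Icc (-|y|) |y|) (x := 0) (y := y) (C := |y| ^ k)
      (fun z _ => (hasDerivAt_expRem k z).hasDerivWithinAt)
      (fun z hz => by
        rw [norm_mul, norm_I, one_mul]
        exact (ih z).trans (pow_le_pow_left₀ (abs_nonneg _) (abs_le.2 hz) _))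
      (convex_Icc _ _) (by simp) (by simp [neg_abs_le, le_abs_self])
    rw [expRem_zero_right] at this
    simpa [pow_succ] using this

lemma norm_expRem_succ_le_pow (k : ℕ) (y : ℝ) : ‖expRem (k + 1) y‖ ≤ 2 * |y| ^ k := by
  rw [expRem_succ]
  refine (norm_sub_le _ _).trans ?_
  have h1 := norm_expRem_le_pow k y
  have h2 : ‖(I * (y : ℂ)) ^ k / (k.factorial : ℂ)‖ ≤ |y| ^ k := by
    simp only [norm_div, norm_pow, norm_mul, norm_I, one_mul, norm_real, Real.norm_eq_abs,
      norm_natCast]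
    exact div_le_self (by positivity) (by exact_mod_cast Nat.one_le_iff_ne_zero.2 k.factorial_ne_zero)
  linarith

/-- Interpolating between the two integer exponents, the remainder of order `k + 1` is bounded by
any power `|y|^s` with `k ≤ s ≤ k + 1`. -/
lemma norm_expRem_le_rpow (k : ℕ) {s : ℝ} (h1 : (k : ℝ) ≤ s) (h2 : s ≤ k + 1) {y : ℝ}
    (hy : y ≠ 0) : ‖expRem (k + 1) y‖ ≤ 2 * |y| ^ s := by
  have hy' : 0 < |y| := abs_pos.2 hy
  rcases le_total |y| 1 with h | h
  · have h3 := norm_expRem_le_pow (k + 1) y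
    have h4 : |y| ^ ((k + 1 : ℕ) : ℝ) ≤ |y| ^ s :=
      Real.rpow_le_rpow_of_exponent_ge hy' h (by push_cast; exact h2)
    rw [Real.rpow_natCast] at h4
    have : 0 ≤ |y| ^ s := by positivity
    linarith
  · have h3 := norm_expRem_succ_le_pow k y
    have h4 : |y| ^ (k : ℝ) ≤ |y| ^ s := Real.rpow_le_rpow_of_exponent_le h h1
    rw [Real.rpow_natCast] at h4
    linarith

lemma continuous_expRem (k : ℕ) : Continuous (expRem k) := by
  unfold expRem; fun_prop

open Set Filter Topology Asymptotics

/-! ### Decay of half-line oscillatory integrals -/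

lemma schwartz_isBigO_atTop (g : SchwartzMap ℝ ℂ) (s : ℝ) :
    (fun x => g x) =O[atTop] fun x : ℝ => x ^ s := by
  have h := (g.isBigO_cocompact_rpow s).mono atTop_le_cocompact
  refine h.trans_eventuallyEq ?_
  filter_upwards [eventually_ge_atTop 0] with x hx
  rw [Real.norm_of_nonneg hx]

lemma integrableOn_norm_mul_rpow (g : SchwartzMap ℝ ℂ) {ρ : ℝ} (hρ : -1 < ρ) :
    IntegrableOn (fun ω : ℝ => ‖g ω‖ * ω ^ ρ) (Ioi 0) := by
  have h := mellin_convergent_of_isBigO_scalar (a := ρ + 2) (b := 0) (s := ρ + 1)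
    (f := fun x => ‖g x‖) (g.continuous.norm.continuousOn.locallyIntegrableOn measurableSet_Ioi)
    (schwartz_isBigO_atTop g _).norm_left (by linarith)
    (by
      simp only [neg_zero, Real.rpow_zero]
      exact (g.continuous.norm.tendsto 0).isBigO_one ℝ |>.mono nhdsWithin_le_nhds)
    (by linarith)
  simpa [mul_comm] using h

/-- The half-line oscillatory integral `∫_0^∞ g(ω) ω^γ e^{iωx} dω`. -/
noncomputable def halfInt (g : ℝ → ℂ) (γ : ℂ) (x : ℝ) : ℂ :=
  ∫ ω in Ioi (0 : ℝ), g ω * (ω : ℂ) ^ γ * Complex.exp (I * (ω : ℂ) * (x : ℂ))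

lemma norm_exp_I_mul (ω x : ℝ) : ‖Complex.exp (I * (ω : ℂ) * (x : ℂ))‖ = 1 := by
  rw [show I * (ω : ℂ) * (x : ℂ) = ((ω * x : ℝ) : ℂ) * I by push_cast; ring]
  exact Complex.norm_exp_ofReal_mul_I _

lemma continuousOn_cpow_Ioi (γ : ℂ) : ContinuousOn (fun ω : ℝ => (ω : ℂ) ^ γ) (Ioi 0) :=
  fun x hx => (continuousAt_ofReal_cpow_const x γ (Or.inr (ne_of_gt hx))).continuousWithinAt

/-- Integrability on the half-line of `g ω^γ` times a continuous factor of growth `|ω|^r`. -/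
lemma integrableOn_mul_cpow (g : SchwartzMap ℝ ℂ) (γ : ℂ) (E : ℝ → ℂ) (hE : Continuous E)
    (C r : ℝ) (hEC : ∀ ω : ℝ, 0 < ω → ‖E ω‖ ≤ C * ω ^ r) (hr : -1 < γ.re + r) :
    IntegrableOn (fun ω : ℝ => E ω * (g ω * (ω : ℂ) ^ γ)) (Ioi 0) := by
  refine ((integrableOn_norm_mul_rpow g hr).const_mul C).mono' ?_ ?_
  · exact (hE.continuousOn.mul (g.continuous.continuousOn.mul
      (continuousOn_cpow_Ioi γ))).aestronglyMeasurable measurableSet_Ioi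
  · filter_upwards [ae_restrict_mem measurableSet_Ioi] with ω hω
    have hω' : (0 : ℝ) < ω := hω
    rw [norm_mul, norm_mul, norm_cpow_eq_rpow_re_of_pos hω', Real.rpow_add hω']
    have := hEC ω hω'
    calc ‖E ω‖ * (‖g ω‖ * ω ^ γ.re) ≤ (C * ω ^ r) * (‖g ω‖ * ω ^ γ.re) := by gcongr
      _ = _ := by ring

/-- Integration by parts for `halfInt`, with primitive `(e^{iωx} - c) / (ix)` of `e^{iωx}`.
The hypotheses `hγr`, `hEC` make the boundary term tend to `0` at `0+`, and `h0` makes the value at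
`0` agree with that limit. -/
lemma halfInt_by_parts (g : SchwartzMap ℝ ℂ) (γ c : ℂ) (x : ℝ) (hγ : -1 < γ.re) (C r : ℝ)
    (hγr : 0 < γ.re + r)
    (hEC : ∀ ω : ℝ, 0 < ω → ‖Complex.exp (I * (ω : ℂ) * (x : ℂ)) - c‖ ≤ C * ω ^ r)
    (h0 : (1 - c) * (0 : ℂ) ^ γ = 0) :
    I * x * halfInt g γ x = - ∫ ω in Ioi (0 : ℝ),
      (Complex.exp (I * (ω : ℂ) * (x : ℂ)) - c) * (deriv g ω * (ω : ℂ) ^ γ) +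
      γ * ((Complex.exp (I * (ω : ℂ) * (x : ℂ)) - c) * (g ω * (ω : ℂ) ^ (γ - 1))) := by
  set e : ℝ → ℂ := fun ω => Complex.exp (I * (ω : ℂ) * (x : ℂ)) with he
  set E : ℝ → ℂ := fun ω => e ω - c with hE
  have hec : Continuous e := by rw [he]; fun_prop
  have hEc : Continuous E := hec.sub continuous_const
  have hE2 : ∀ ω, ‖E ω‖ ≤ 1 + ‖c‖ := fun ω =>
    (norm_sub_le _ _).trans (by rw [he]; simp only [norm_exp_I_mul]; rfl)
  have i1 : IntegrableOn (fun ω : ℝ => e ω * (g ω * (ω : ℂ) ^ γ)) (Ioi 0) :=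
    integrableOn_mul_cpow g γ e hec 1 0 (fun ω _ => by simp [he, norm_exp_I_mul]) (by linarith)
  have i2 : IntegrableOn (fun ω : ℝ => E ω * (deriv g ω * (ω : ℂ) ^ γ)) (Ioi 0) :=
    integrableOn_mul_cpow (SchwartzMap.derivCLM ℂ ℂ g) γ E hEc (1 + ‖c‖) 0
      (fun ω _ => by simpa using hE2 ω) (by linarith)
  have i3 : IntegrableOn (fun ω : ℝ => E ω * (g ω * (ω : ℂ) ^ (γ - 1))) (Ioi 0) :=
    integrableOn_mul_cpow g (γ - 1) E hEc C r hEC (by simp; linarith)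
  have hd : ∀ ω ∈ Ioi (0 : ℝ), HasDerivAt (fun ω : ℝ => E ω * (g ω * (ω : ℂ) ^ γ))
      (I * x * (e ω * (g ω * (ω : ℂ) ^ γ)) + (E ω * (deriv g ω * (ω : ℂ) ^ γ) +
        γ * (E ω * (g ω * (ω : ℂ) ^ (γ - 1))))) ω := by
    intro ω hω
    have hω' : ω ≠ 0 := ne_of_gt hω
    have d1 : HasDerivAt E (I * x * e ω) ω := by
      have : HasDerivAt (fun ω : ℝ => I * (ω : ℂ) * (x : ℂ)) (I * x) ω := by
        simpa using ((hasDerivAt_id ω).ofReal_comp.const_mul I).mul_const (x : ℂ)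
      simpa [hE, he, mul_comm] using this.cexp.sub_const c
    have d2 : HasDerivAt g (deriv g ω) ω := (g.differentiable ω).hasDerivAt
    have d3 : HasDerivAt (fun ω : ℝ => (ω : ℂ) ^ γ) (γ * (ω : ℂ) ^ (γ - 1)) ω := by
      by_cases hγ0 : γ = 0
      · subst hγ0; simpa using hasDerivAt_const ω (1 : ℂ)
      · exact hasDerivAt_ofReal_cpow_const hω' hγ0
    convert! d1.mul (d2.mul d3) using 1
    simp only [Pi.mul_apply]
    ring
  have hint := (i1.const_mul (I * x)).add (i2.add (i3.const_mul γ))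
  have hF0 : E 0 * (g 0 * ((0 : ℝ) : ℂ) ^ γ) = 0 := by
    simp only [hE, he]
    simp only [ofReal_zero, mul_zero, zero_mul, Complex.exp_zero]
    linear_combination g 0 * h0
  have hcont : ContinuousWithinAt (fun ω : ℝ => E ω * (g ω * (ω : ℂ) ^ γ)) (Ici 0) 0 := by
    rw [← continuousWithinAt_Ioi_iff_Ici]
    show Tendsto _ _ (𝓝 (E 0 * (g 0 * ((0 : ℝ) : ℂ) ^ γ)))
    rw [hF0]
    have h1 : Tendsto (fun ω : ℝ => C * ‖g ω‖ * ω ^ (γ.re + r)) (𝓝[>] 0) (𝓝 0) := by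
      have : ContinuousAt (fun ω : ℝ => C * ‖g ω‖ * ω ^ (γ.re + r)) 0 :=
        (continuousAt_const.mul g.continuous.norm.continuousAt).mul
          (Real.continuousAt_rpow_const _ _ (Or.inr hγr.le))
      have h2 := this.tendsto.mono_left (nhdsWithin_le_nhds (s := Ioi 0))
      simpa [Real.zero_rpow hγr.ne'] using h2
    refine squeeze_zero_norm' ?_ h1
    filter_upwards [self_mem_nhdsWithin] with ω hω
    have hω' : (0 : ℝ) < ω := hω
    rw [norm_mul, norm_mul, norm_cpow_eq_rpow_re_of_pos hω', Real.rpow_add hω']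
    have := hEC ω hω'
    calc ‖E ω‖ * (‖g ω‖ * ω ^ γ.re) ≤ (C * ω ^ r) * (‖g ω‖ * ω ^ γ.re) := by gcongr
      _ = _ := by ring
  have htop : Tendsto (fun ω : ℝ => E ω * (g ω * (ω : ℂ) ^ γ)) atTop (𝓝 0) := by
    have h1 : (fun ω : ℝ => E ω * (g ω * (ω : ℂ) ^ γ)) =O[atTop]
        fun ω : ℝ => (1 : ℝ) * (ω ^ (-γ.re - 1) * ω ^ γ.re) := by
      refine IsBigO.mul ?_ (IsBigO.mul (schwartz_isBigO_atTop g _) ?_)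
      · exact IsBigO.of_bound (1 + ‖c‖) (Eventually.of_forall fun ω => by simpa using hE2 ω)
      · refine IsBigO.of_bound 1 ?_
        filter_upwards [eventually_gt_atTop 0] with ω hω
        rw [norm_cpow_eq_rpow_re_of_pos hω, one_mul, Real.norm_of_nonneg (by positivity)]
    refine h1.trans_tendsto ?_
    refine (tendsto_rpow_neg_atTop (y := 1) one_pos).congr' ?_
    filter_upwards [eventually_gt_atTop 0] with ω hω
    rw [← Real.rpow_add hω, one_mul]; congr 1; ring
  have key := integral_Ioi_of_hasDerivAt_of_tendsto hcont hd hint htop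
  simp only [hF0, sub_zero] at key
  replace key := (integral_add (i1.const_mul (I * x)) (i2.add (i3.const_mul γ))).symm.trans key
  rw [integral_const_mul] at key
  have hA : halfInt g γ x = ∫ ω in Ioi (0 : ℝ), e ω * (g ω * (ω : ℂ) ^ γ) := by
    unfold halfInt; congr 1; funext ω; rw [mul_comm (e ω)]
  rw [hA]
  exact eq_neg_of_add_eq_zero_left key

/-- The case `0 ≤ t ≤ 1` of the decay estimate: the primitive `(e^{iωx} - 1) / (ix)` is
`O(|x|^{-t} ω^{1-t})`, which compensates the singularity of `ω^{γ-1}` at the origin. -/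
lemma halfInt_decay_base (g : SchwartzMap ℝ ℂ) (γ : ℂ) {t : ℝ} (ht0 : 0 ≤ t) (ht1 : t ≤ 1)
    (hγ : t - 1 < γ.re) : ∃ C, ∀ x ≠ 0, ‖halfInt g γ x‖ ≤ C * |x| ^ (-t) := by
  set G := SchwartzMap.derivCLM ℂ ℂ g with hG
  refine ⟨2 * ∫ ω in Ioi (0 : ℝ), (‖G ω‖ * ω ^ (γ.re + (1 - t)) +
    ‖γ‖ * (‖g ω‖ * ω ^ (γ.re - t))), fun x hx => ?_⟩
  have hx' : 0 < |x| := abs_pos.2 hx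
  have hE : ∀ ω : ℝ, 0 < ω → ‖Complex.exp (I * (ω : ℂ) * (x : ℂ)) - 1‖
      ≤ 2 * |x| ^ (1 - t) * ω ^ (1 - t) := by
    intro ω hω
    have := norm_expRem_le_rpow 0 (s := 1 - t) (by simpa using ht1) (by simpa using ht0)
      (y := ω * x) (mul_ne_zero hω.ne' hx)
    rw [abs_mul, abs_of_pos hω, Real.mul_rpow hω.le hx'.le] at this
    simp only [expRem, zero_add, Finset.sum_range_one, pow_zero, Nat.factorial_zero, Nat.cast_one,
      div_one, ofReal_mul] at this
    rw [mul_assoc I]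
    linarith
  have hp := halfInt_by_parts g γ 1 x (by linarith) _ (1 - t) (by linarith) hE
    (by simp)
  have hn : |x| * ‖halfInt g γ x‖ ≤ 2 * |x| ^ (1 - t) *
      ∫ ω in Ioi (0 : ℝ), (‖G ω‖ * ω ^ (γ.re + (1 - t)) + ‖γ‖ * (‖g ω‖ * ω ^ (γ.re - t))) := by
    have h1 : ‖I * x * halfInt g γ x‖ = |x| * ‖halfInt g γ x‖ := by simp
    rw [← h1, hp, norm_neg, ← integral_const_mul]
    refine norm_integral_le_of_norm_le (((integrableOn_norm_mul_rpow G (by linarith)).add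
      ((integrableOn_norm_mul_rpow g (by linarith)).const_mul _)).const_mul _) ?_
    filter_upwards [ae_restrict_mem measurableSet_Ioi] with ω hω
    have hω' : (0 : ℝ) < ω := hω
    have h2 := hE ω hω'
    refine (norm_add_le _ _).trans ?_
    simp only [norm_mul, norm_cpow_eq_rpow_re_of_pos hω']
    rw [show (γ - 1).re = γ.re - 1 by simp, Real.rpow_add hω',
      show γ.re - t = (γ.re - 1) + (1 - t) by ring, Real.rpow_add hω']
    have h3 : deriv g ω = G ω := rfl
    rw [h3]
    calc _ ≤ (2 * |x| ^ (1 - t) * ω ^ (1 - t)) * (‖G ω‖ * ω ^ γ.re) +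
          ‖γ‖ * ((2 * |x| ^ (1 - t) * ω ^ (1 - t)) * (‖g ω‖ * ω ^ (γ.re - 1))) := by gcongr
      _ = _ := by ring
  have h4 : |x| ^ (1 - t) = |x| * |x| ^ (-t) := by
    rw [sub_eq_add_neg, Real.rpow_add hx', Real.rpow_one]
  rw [h4] at hn
  refine le_of_mul_le_mul_left (hn.trans (le_of_eq ?_)) hx'
  ring

/-- For Schwartz `g` the half-line integral decays like `|x|^{-t}` for every `t < Re γ + 1`;
each integration by parts gains one power of `|x|`. -/
lemma halfInt_decay (n : ℕ) : ∀ (t : ℝ), n ≤ t → t ≤ n + 1 → ∀ (g : SchwartzMap ℝ ℂ) (γ : ℂ),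
    t - 1 < γ.re → ∃ C, ∀ x ≠ 0, ‖halfInt g γ x‖ ≤ C * |x| ^ (-t) := by
  induction n with
  | zero =>
    intro t h0 h1 g γ hγ
    exact halfInt_decay_base g γ (by simpa using h0) (by simpa using h1) hγ
  | succ n ih =>
    intro t h0 h1 g γ hγ
    push_cast at h0 h1
    have hn : (0 : ℝ) ≤ n := n.cast_nonneg
    obtain ⟨C1, hC1⟩ := ih (t - 1) (by linarith) (by linarith) (SchwartzMap.derivCLM ℂ ℂ g) γ
      (by linarith)
    obtain ⟨C2, hC2⟩ := ih (t - 1) (by linarith) (by linarith) g (γ - 1) (by simp; linarith)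
    refine ⟨C1 + ‖γ‖ * C2, fun x hx => ?_⟩
    have hx' : 0 < |x| := abs_pos.2 hx
    have hγ0 : γ ≠ 0 := by rintro rfl; simp at hγ; linarith
    have hp := halfInt_by_parts g γ 0 x (by linarith) 1 0 (by linarith)
      (fun ω _ => by simp [norm_exp_I_mul]) (by simp [hγ0])
    have hec : Continuous fun ω : ℝ => Complex.exp (I * (ω : ℂ) * (x : ℂ)) := by fun_prop
    have i2 := integrableOn_mul_cpow (SchwartzMap.derivCLM ℂ ℂ g) γ _ hec 1 0
      (fun ω _ => by simp [norm_exp_I_mul]) (by linarith)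
    have i3 := integrableOn_mul_cpow g (γ - 1) _ hec 1 0
      (fun ω _ => by simp [norm_exp_I_mul]) (by simp; linarith)
    have hs : I * x * halfInt g γ x =
        -(halfInt (SchwartzMap.derivCLM ℂ ℂ g) γ x + γ * halfInt g (γ - 1) x) := by
      rw [hp]
      simp only [sub_zero]
      have := integral_add i2 (i3.const_mul γ)
      simp only [SchwartzMap.derivCLM_apply] at this
      rw [this, integral_const_mul]
      simp only [halfInt, SchwartzMap.derivCLM_apply, mul_comm (Complex.exp _)]
    have h1 : |x| * ‖halfInt g γ x‖ ≤ C1 * |x| ^ (-(t - 1)) + ‖γ‖ * (C2 * |x| ^ (-(t - 1))) := by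
      calc |x| * ‖halfInt g γ x‖ = ‖I * x * halfInt g γ x‖ := by simp
        _ ≤ ‖halfInt (SchwartzMap.derivCLM ℂ ℂ g) γ x‖ + ‖γ‖ * ‖halfInt g (γ - 1) x‖ := by
            rw [hs, norm_neg, ← norm_mul]; exact norm_add_le _ _
        _ ≤ _ := by gcongr; exacts [hC1 x hx, hC2 x hx]
    have h4 : |x| ^ (-(t - 1)) = |x| * |x| ^ (-t) := by
      rw [show -(t - 1) = 1 + -t by ring, Real.rpow_add hx', Real.rpow_one]
    rw [h4] at h1
    refine le_of_mul_le_mul_left (h1.trans (le_of_eq ?_)) hx'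
    ring

/-! ### Fourier transform conventions -/

open FourierTransform in
/-- The non-unitary transform `FT` is Mathlib's transform `𝓕` up to rescaling the frequency. -/
lemma FT_eq_fourier (f : ℝ → ℂ) (ω : ℝ) : FT f ω = 𝓕 f (ω / (2 * Real.pi)) := by
  have hpi : (Real.pi : ℂ) ≠ 0 := by exact_mod_cast Real.pi_ne_zero
  rw [Real.fourier_eq', FT]
  congr 1; funext x
  rw [smul_eq_mul, mul_comm]
  congr 2
  simp only [RCLike.inner_apply, conj_trivial]
  push_cast
  field_simp

open FourierTransform in
lemma exists_schwartz_FT (φ : SchwartzMap ℝ ℂ) : ∃ S : SchwartzMap ℝ ℂ, ∀ ω, S ω = FT φ ω := by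
  have h : (1 / (2 * Real.pi)) ≠ 0 := by positivity
  refine ⟨SchwartzMap.compCLMOfContinuousLinearEquiv ℂ
    (ContinuousLinearEquiv.unitsEquivAut ℝ (Units.mk0 _ h)) (𝓕 φ), fun ω => ?_⟩
  rw [FT_eq_fourier, SchwartzMap.compCLMOfContinuousLinearEquiv_apply, Function.comp_apply,
    SchwartzMap.fourier_coe]
  simp [div_eq_mul_inv]

open FourierTransform in
/-- Parseval's identity in the bilinear form, without complex conjugation. -/
lemma FT_parseval (φ ψ : SchwartzMap ℝ ℂ) :
    (1 / (2 * (Real.pi : ℂ))) * ∫ ω : ℝ, FT φ ω * FT ψ (-ω) = ∫ x : ℝ, φ x * ψ x := by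
  have h1 : ∀ ω : ℝ, FT φ ω * FT ψ (-ω) =
      (fun ξ : ℝ => 𝓕 φ ξ * 𝓕⁻ ψ ξ) (ω / (2 * Real.pi)) := by
    intro ω
    simp only [FT_eq_fourier, SchwartzMap.fourier_coe, SchwartzMap.fourierInv_coe,
      Real.fourierInv_eq_fourier_neg, neg_div]
  simp_rw [h1]
  rw [Measure.integral_comp_div (fun ξ : ℝ => 𝓕 φ ξ * 𝓕⁻ ψ ξ),
    SchwartzMap.integral_fourier_mul_eq, FourierTransform.fourier_fourierInv_eq,
    abs_of_pos (by positivity), real_smul, ← mul_assoc]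
  have hpi : (Real.pi : ℂ) ≠ 0 := by exact_mod_cast Real.pi_ne_zero
  push_cast
  field_simp

open FourierTransform in
/-- Fourier inversion: `FT` undoes the inverse transform of a continuous integrable `G`, provided
that the inverse transform is integrable. -/
lemma FT_inverse {G D : ℝ → ℂ} (hG : Continuous G) (hGi : Integrable G) (hD : Integrable D)
    (h : ∀ x : ℝ, D x = (1 / (2 * (Real.pi : ℂ))) *
      ∫ ω : ℝ, G ω * Complex.exp (I * (ω : ℂ) * (x : ℂ))) (ω : ℝ) : FT D ω = G ω := by
  have hpi : (Real.pi : ℂ) ≠ 0 := by exact_mod_cast Real.pi_ne_zero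
  have h2 : (2 * Real.pi) ≠ 0 := by positivity
  set H : ℝ → ℂ := fun ξ => G (2 * Real.pi * ξ) with hH
  have hHc : Continuous H := by rw [hH]; fun_prop
  have hHi : Integrable H := hGi.comp_mul_left' h2
  have hDH : D = 𝓕⁻ H := by
    funext x
    rw [h, Real.fourierInv_eq']
    have := Measure.integral_comp_mul_left
      (fun ω : ℝ => G ω * Complex.exp (I * (ω : ℂ) * (x : ℂ))) (2 * Real.pi)
    rw [abs_of_pos (by positivity), real_smul] at this
    push_cast at this
    rw [one_div, ← this]
    congr 1; funext ξ
    rw [smul_eq_mul, mul_comm]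
    congr 2
    simp only [RCLike.inner_apply, conj_trivial]
    push_cast
    ring
  have hF : Integrable (𝓕 H) := by
    have h3 : 𝓕 H = fun x => D (-x) := by
      funext x; rw [hDH, Real.fourierInv_eq_fourier_neg, neg_neg]
    rw [h3]; exact hD.comp_neg
  rw [FT_eq_fourier, hDH, hHc.fourier_fourierInv_eq hHi hF, hH]
  simp only
  congr 1
  field_simp

/-! ### The multiplier -/

lemma hab_eq_max (a b : ℂ) {γ : ℂ} (hγ : 0 < γ.re) (ω : ℝ) : hab a b γ ω =
    a * ((max ω 0 : ℝ) : ℂ) ^ γ + b * ((max (-ω) 0 : ℝ) : ℂ) ^ γ := by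
  have h0 : γ ≠ 0 := by rintro rfl; simp at hγ
  unfold hab
  split_ifs with h1 h2
  · rw [max_eq_left h1.le, max_eq_right (by linarith)]; simp [h0]
  · rw [max_eq_right h2.le, max_eq_left (by linarith)]; simp [h0]
  · have : ω = 0 := le_antisymm (not_lt.1 h1) (not_lt.1 h2)
    subst this; simp [h0]

lemma continuous_hab (a b : ℂ) {γ : ℂ} (hγ : 0 < γ.re) : Continuous (hab a b γ) := by
  rw [funext (hab_eq_max a b hγ)]
  have := Complex.continuous_ofReal_cpow_const hγ
  exact (continuous_const.mul (this.comp (continuous_id.max continuous_const))).add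
    (continuous_const.mul (this.comp (continuous_neg.max continuous_const)))

lemma hab_zero (a b γ : ℂ) : hab a b γ 0 = 0 := by simp [hab]

lemma norm_hab (a b γ : ℂ) {ω : ℝ} (hω : ω ≠ 0) :
    ‖hab a b γ ω‖ = (if 0 < ω then ‖a‖ else ‖b‖) * |ω| ^ γ.re := by
  unfold hab
  rcases lt_or_gt_of_ne hω with h | h
  · rw [if_neg h.not_gt, if_pos h, if_neg h.not_gt, norm_mul,
      norm_cpow_eq_rpow_re_of_pos (by linarith), abs_of_neg h]
  · rw [if_pos h, if_pos h, norm_mul, norm_cpow_eq_rpow_re_of_pos h, abs_of_pos h]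

lemma hab_ne_zero {a b : ℂ} (γ : ℂ) (ha : a ≠ 0) (hb : b ≠ 0) {ω : ℝ} (hω : ω ≠ 0) :
    hab a b γ ω ≠ 0 := by
  rw [← norm_ne_zero_iff, norm_hab a b γ hω]
  have := abs_pos.2 hω
  split_ifs <;> positivity

lemma norm_hab_le (a b : ℂ) {γ : ℂ} (ω : ℝ) :
    ‖hab a b γ ω‖ ≤ (‖a‖ + ‖b‖) * |ω| ^ γ.re := by
  rcases eq_or_ne ω 0 with rfl | h
  · rw [hab_zero, norm_zero]; positivity
  · rw [norm_hab a b γ h]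
    gcongr
    split_ifs <;> simp

lemma norm_hab_inv_le (a b γ : ℂ) (ω : ℝ) :
    ‖(hab a b γ ω)⁻¹‖ ≤ (‖a‖⁻¹ + ‖b‖⁻¹) * |ω| ^ (-γ.re) := by
  rcases eq_or_ne ω 0 with rfl | h
  · rw [hab_zero, inv_zero, norm_zero]; positivity
  · rw [norm_inv, norm_hab a b γ h, mul_inv, Real.rpow_neg (abs_nonneg _)]
    gcongr
    split_ifs <;> simp

lemma exists_schwartz_neg (g : SchwartzMap ℝ ℂ) :
    ∃ g' : SchwartzMap ℝ ℂ, ∀ ω, g' ω = g (-ω) :=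
  ⟨SchwartzMap.compCLMOfContinuousLinearEquiv ℂ (ContinuousLinearEquiv.neg ℝ) g, fun _ => rfl⟩

lemma integrable_norm_mul_abs_rpow (g : SchwartzMap ℝ ℂ) {ρ : ℝ} (hρ : -1 < ρ) :
    Integrable (fun ω : ℝ => ‖g ω‖ * |ω| ^ ρ) := by
  obtain ⟨g', hg'⟩ := exists_schwartz_neg g
  rw [← integrableOn_univ, ← Iic_union_Ioi (a := (0 : ℝ)), integrableOn_union]
  constructor
  · rw [integrableOn_Iic_iff_integrableOn_Iio]
    have h2 : IntegrableOn (fun ω : ℝ => ‖g' (-ω)‖ * (-ω) ^ ρ) (Iio 0) := by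
      exact IntegrableOn.comp_neg_Iio (c := (0 : ℝ)) (f := fun ω : ℝ => ‖g' ω‖ * ω ^ ρ) (by
        rw [neg_zero]; exact integrableOn_norm_mul_rpow g' hρ)
    refine h2.congr_fun (fun ω hω => ?_) measurableSet_Iio
    simp only [hg', neg_neg, abs_of_neg (show ω < 0 from hω)]
  · refine (integrableOn_norm_mul_rpow g hρ).congr_fun (fun ω hω => ?_) measurableSet_Ioi
    simp only [abs_of_pos (show 0 < ω from hω)]

/-- The Fourier multiplier `ψ̂(ω) h(-ω)` of `D^*ψ` is integrable. -/
lemma integrable_symbol (a b : ℂ) {γ : ℂ} (hγ : 0 < γ.re) (S : SchwartzMap ℝ ℂ) :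
    Integrable (fun ω : ℝ => S ω * hab a b γ (-ω)) := by
  refine ((integrable_norm_mul_abs_rpow S (ρ := γ.re) (by linarith)).const_mul
    (‖a‖ + ‖b‖)).mono' ?_ (Eventually.of_forall fun ω => ?_)
  · exact (S.continuous.mul ((continuous_hab a b hγ).comp continuous_neg)).aestronglyMeasurable
  · have := norm_hab_le a b (γ := γ) (-ω)
    rw [abs_neg] at this
    rw [norm_mul]
    calc _ ≤ ‖S ω‖ * ((‖a‖ + ‖b‖) * |ω| ^ γ.re) := by gcongr
      _ = _ := by ring

lemma integral_symbol_eq_halfInt (a b : ℂ) {γ : ℂ} (hγ : 0 < γ.re) (S S' : SchwartzMap ℝ ℂ)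
    (hS' : ∀ ω, S' ω = S (-ω)) (x : ℝ) :
    ∫ ω : ℝ, S ω * hab a b γ (-ω) * Complex.exp (I * (ω : ℂ) * (x : ℂ)) =
      a * halfInt S' γ (-x) + b * halfInt S γ x := by
  have hi : Integrable fun ω : ℝ =>
      S ω * hab a b γ (-ω) * Complex.exp (I * (ω : ℂ) * (x : ℂ)) := by
    refine (integrable_symbol a b hγ S).mul_bdd (c := 1) ?_ ?_
    · exact Continuous.aestronglyMeasurable (by fun_prop)
    · exact Eventually.of_forall fun ω => (norm_exp_I_mul ω x).le
  rw [← intervalIntegral.integral_Iic_add_Ioi hi.integrableOn hi.integrableOn (b := 0)]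
  congr 1
  · rw [← neg_zero, ← integral_comp_neg_Ioi, halfInt, ← integral_const_mul]
    refine setIntegral_congr_fun measurableSet_Ioi fun ω hω => ?_
    have hω' : (0 : ℝ) < ω := hω
    simp only [neg_neg, hab, if_pos hω', hS']
    push_cast
    rw [show I * -(ω : ℂ) * x = I * ω * -x by ring]
    ring
  · rw [halfInt, ← integral_const_mul]
    refine setIntegral_congr_fun measurableSet_Ioi fun ω hω => ?_
    have hω' : (0 : ℝ) < ω := hω
    simp only [hab, if_neg (show ¬ (0 : ℝ) < -ω by linarith),
      if_pos (show -ω < 0 by linarith), neg_neg]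
    ring

/-! ### Decay and vanishing moments of the adjoint derivative -/

/-- `D^*ψ` decays like `|x|^{-t}` for every `t < Re γ + 1`, because its symbol is a combination of
`ω^γ g(ω)` on the two half-lines with `g` Schwartz. -/
lemma Dstar_decay (a b : ℂ) {γ : ℂ} (hγ : 0 < γ.re) (ψ : SchwartzMap ℝ ℂ) {t : ℝ} (ht : 0 ≤ t)
    (htγ : t - 1 < γ.re) :
    ∃ C, 0 ≤ C ∧ ∀ x, ‖Dstar a b γ ψ x‖ ≤ C * (1 + |x|) ^ (-t) := by
  obtain ⟨S, hS⟩ := exists_schwartz_FT ψ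
  obtain ⟨S', hS'⟩ := exists_schwartz_neg S
  have hn : (⌊t⌋₊ : ℝ) ≤ t := Nat.floor_le ht
  have hn' : t ≤ ⌊t⌋₊ + 1 := (Nat.lt_floor_add_one t).le
  obtain ⟨C1, h1⟩ := halfInt_decay ⌊t⌋₊ t hn hn' S γ htγ
  obtain ⟨C2, h2⟩ := halfInt_decay ⌊t⌋₊ t hn hn' S' γ htγ
  set p := ‖(1 / (2 * (Real.pi : ℂ)))‖ with hp
  set M := p * ∫ ω : ℝ, ‖S ω * hab a b γ (-ω)‖ with hM
  set N := p * (‖a‖ * C2 + ‖b‖ * C1) with hN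
  have hM0 : 0 ≤ M := by positivity
  have hD : ∀ x, Dstar a b γ ψ x = (1 / (2 * (Real.pi : ℂ))) *
      ∫ ω : ℝ, S ω * hab a b γ (-ω) * Complex.exp (I * (ω : ℂ) * (x : ℂ)) := by
    intro x; simp only [Dstar, hS]
  have hb1 : ∀ x, ‖Dstar a b γ ψ x‖ ≤ M := by
    intro x
    rw [hD, norm_mul, hM]
    gcongr
    refine (norm_integral_le_integral_norm _).trans (le_of_eq ?_)
    simp only [norm_mul, norm_exp_I_mul, mul_one]
  have hb2 : ∀ x ≠ 0, ‖Dstar a b γ ψ x‖ ≤ N * |x| ^ (-t) := by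
    intro x hx
    rw [hD, norm_mul, integral_symbol_eq_halfInt a b hγ S S' hS', hN, mul_assoc]
    gcongr
    refine (norm_add_le _ _).trans ?_
    have h3 := h1 x hx
    have h4 := h2 (-x) (neg_ne_zero.2 hx)
    rw [abs_neg] at h4
    rw [norm_mul, norm_mul]
    calc _ ≤ ‖a‖ * (C2 * |x| ^ (-t)) + ‖b‖ * (C1 * |x| ^ (-t)) := by gcongr
      _ = _ := by ring
  refine ⟨max M N * 2 ^ t, by positivity, fun x => ?_⟩
  have hMN : 0 ≤ max M N := hM0.trans (le_max_left _ _)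
  rcases le_total |x| 1 with h | h
  · have h5 : (2 : ℝ) ^ (-t) ≤ (1 + |x|) ^ (-t) :=
      Real.rpow_le_rpow_of_nonpos (by positivity) (by linarith) (by linarith)
    have h6 : (2 : ℝ) ^ t * 2 ^ (-t) = 1 := by rw [← Real.rpow_add two_pos]; simp
    calc ‖Dstar a b γ ψ x‖ ≤ max M N := (hb1 x).trans (le_max_left _ _)
      _ = max M N * 2 ^ t * 2 ^ (-t) := by rw [mul_assoc, h6, mul_one]
      _ ≤ _ := by gcongr
  · have hx : x ≠ 0 := by rintro rfl; simp at h; linarith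
    have h5 : |x| ^ (-t) ≤ 2 ^ t * (1 + |x|) ^ (-t) := by
      have : ((1 + |x|) / 2) ^ (-t) = 2 ^ t * (1 + |x|) ^ (-t) := by
        rw [Real.div_rpow (by positivity) (by positivity), Real.rpow_neg two_pos.le, div_inv_eq_mul,
          mul_comm]
      rw [← this]
      exact Real.rpow_le_rpow_of_nonpos (by positivity) (by linarith) (by linarith)
    calc ‖Dstar a b γ ψ x‖ ≤ N * |x| ^ (-t) := hb2 x hx
      _ ≤ max M N * (2 ^ t * (1 + |x|) ^ (-t)) := by gcongr; exact le_max_right _ _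
      _ = _ := by ring

lemma continuous_Dstar (a b : ℂ) {γ : ℂ} (hγ : 0 < γ.re) (ψ : SchwartzMap ℝ ℂ) :
    Continuous (Dstar a b γ ψ) := by
  obtain ⟨S, hS⟩ := exists_schwartz_FT ψ
  have h := integrable_symbol a b hγ S
  unfold Dstar
  simp only [← hS]
  refine continuous_const.mul (continuous_of_dominated (bound := fun ω => ‖S ω * hab a b γ (-ω)‖)
    (fun x => ?_) (fun x => Eventually.of_forall fun ω => ?_) h.norm
    (Eventually.of_forall fun ω => by fun_prop))
  · exact h.aestronglyMeasurable.mul (Continuous.aestronglyMeasurable (by fun_prop))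
  · rw [norm_mul _ (Complex.exp _), norm_exp_I_mul, mul_one]

lemma integrable_abs_rpow_mul_of_decay {D : ℝ → ℂ} (hD : Continuous D) {C t : ℝ}
    (h : ∀ x, ‖D x‖ ≤ C * (1 + |x|) ^ (-t)) {r : ℝ} (hr : 0 ≤ r) (hrt : r + 1 < t) :
    Integrable fun x : ℝ => |x| ^ r * ‖D x‖ := by
  have h1 := (integrable_one_add_norm (E := ℝ) (μ := volume) (r := t - r)
    (by simp; linarith)).const_mul C
  refine h1.mono' ?_ (Eventually.of_forall fun x => ?_)
  · exact Continuous.aestronglyMeasurable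
      ((Real.continuous_rpow_const hr |>.comp continuous_abs).mul hD.norm)
  · rw [Real.norm_of_nonneg (by positivity), Real.norm_eq_abs]
    have hx : 0 < 1 + |x| := by positivity
    calc |x| ^ r * ‖D x‖ ≤ (1 + |x|) ^ r * (C * (1 + |x|) ^ (-t)) := by
          gcongr
          · linarith
          · exact h x
      _ = C * (1 + |x|) ^ (-(t - r)) := by
          rw [show -(t - r) = r + -t by ring, Real.rpow_add hx]; ring

/-- A polynomial of degree `< k` that is `O(ω^{k-1+ε})` at the origin vanishes. -/
lemma coeff_eq_zero (k : ℕ) (c : ℕ → ℂ) : ∀ (ε C : ℝ), 0 < ε →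
    (∀ ω : ℝ, 0 < ω → ω ≤ 1 →
      ‖∑ j ∈ Finset.range k, c j * (ω : ℂ) ^ j‖ ≤ C * ω ^ ((k : ℝ) - 1 + ε)) →
    ∀ j < k, c j = 0 := by
  induction k with
  | zero => intro _ _ _ _ j hj; omega
  | succ k ih =>
    intro ε C hε h
    -- Dropping the top term leaves a sum of size `O(ω^k)`, which is the hypothesis for `k`
    -- with `ε = 1`.
    have h0 : ∀ j < k, c j = 0 := by
      refine ih 1 (|C| + ‖c k‖) one_pos fun ω hω hω1 => ?_
      have h1 := h ω hω hω1
      rw [Finset.sum_range_succ] at h1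
      have h2 : ω ^ (((k + 1 : ℕ) : ℝ) - 1 + ε) ≤ ω ^ k := by
        rw [← Real.rpow_natCast]
        exact Real.rpow_le_rpow_of_exponent_ge hω hω1 (by push_cast; linarith)
      have h3 : ‖c k * (ω : ℂ) ^ k‖ = ‖c k‖ * ω ^ k := by
        rw [norm_mul, norm_pow, norm_real, Real.norm_of_nonneg hω.le]
      rw [sub_add_cancel, Real.rpow_natCast]
      calc _ = ‖(∑ j ∈ Finset.range k, c j * (ω : ℂ) ^ j + c k * (ω : ℂ) ^ k)
              - c k * (ω : ℂ) ^ k‖ := by rw [add_sub_cancel_right]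
        _ ≤ C * ω ^ (((k + 1 : ℕ) : ℝ) - 1 + ε) + ‖c k‖ * ω ^ k := by
            rw [← h3]; exact (norm_sub_le _ _).trans (by gcongr)
        _ ≤ |C| * ω ^ k + ‖c k‖ * ω ^ k := by
            gcongr
            exact le_abs_self C
        _ = _ := by ring
    have hk : ‖c k‖ ≤ 0 := by
      have hlim : Tendsto (fun ω : ℝ => C * ω ^ ε) (𝓝[>] 0) (𝓝 0) := by
        have : ContinuousAt (fun ω : ℝ => C * ω ^ ε) 0 :=
          continuousAt_const.mul (Real.continuousAt_rpow_const _ _ (Or.inr hε.le))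
        simpa [Real.zero_rpow hε.ne'] using this.tendsto.mono_left (nhdsWithin_le_nhds (s := Ioi 0))
      refine ge_of_tendsto hlim ?_
      filter_upwards [Ioc_mem_nhdsGT (zero_lt_one' ℝ)] with ω hω
      have h1 := h ω hω.1 hω.2
      rw [Finset.sum_range_succ, Finset.sum_eq_zero (fun j hj => by
        rw [h0 j (Finset.mem_range.1 hj), zero_mul]), zero_add, norm_mul, norm_pow, norm_real,
        Real.norm_of_nonneg hω.1.le] at h1
      push_cast at h1
      rw [add_sub_cancel_right, Real.rpow_add hω.1, Real.rpow_natCast] at h1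
      have h2 : 0 < ω ^ k := pow_pos hω.1 _
      refine le_of_mul_le_mul_right (h1.trans (le_of_eq ?_)) h2
      ring
    intro j hj
    rcases Nat.lt_succ_iff_lt_or_eq.1 hj with hj | rfl
    · exact h0 j hj
    · exact norm_le_zero_iff.1 hk

/-- If the transform of `D` is `O(|ω|^σ)` with `σ > k`, then the moments of `D` of order `≤ k`
vanish, so the Taylor polynomial may be subtracted from the exponential for free. -/
lemma integral_mul_expRem {D : ℝ → ℂ} (hD : Continuous D) (k : ℕ) {s σ M : ℝ}
    (hs : (k : ℝ) < s) (hsk : s ≤ k + 1) (hsσ : s ≤ σ)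
    (hDi : ∀ r : ℝ, 0 ≤ r → r ≤ s → Integrable fun x : ℝ => |x| ^ r * ‖D x‖)
    (hM : 0 ≤ M) (hFT : ∀ ω, ‖FT D ω‖ ≤ M * |ω| ^ σ) (ω : ℝ) :
    ∫ x : ℝ, expRem (k + 1) (ω * x) * D x = FT D (-ω) := by
  have hk0 : (0 : ℝ) ≤ k := k.cast_nonneg
  have hmom : ∀ j ∈ Finset.range (k + 1), Integrable fun x : ℝ => (x : ℂ) ^ j * D x := by
    intro j hj
    have hj' : (j : ℝ) ≤ k := by exact_mod_cast Nat.lt_succ_iff.1 (Finset.mem_range.1 hj)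
    refine (hDi j j.cast_nonneg (by linarith)).mono'
      (Continuous.aestronglyMeasurable (by fun_prop)) (Eventually.of_forall fun x => ?_)
    rw [norm_mul, norm_pow, norm_real, Real.norm_eq_abs, Real.rpow_natCast]
  have hDint : Integrable D := by
    simpa using hmom 0 (by simp)
  set c : ℕ → ℂ := fun j => I ^ j / (j.factorial : ℂ) * ∫ x : ℝ, (x : ℂ) ^ j * D x with hc
  have hsplit : ∀ ω : ℝ, ∫ x : ℝ, expRem (k + 1) (ω * x) * D x =
      FT D (-ω) - ∑ j ∈ Finset.range (k + 1), c j * (ω : ℂ) ^ j := by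
    intro ω
    have he : ∀ x : ℝ, expRem (k + 1) (ω * x) * D x =
        D x * Complex.exp (-(I * ((-ω : ℝ) : ℂ) * (x : ℂ))) -
        ∑ j ∈ Finset.range (k + 1), (I ^ j / (j.factorial : ℂ) * (ω : ℂ) ^ j) *
          ((x : ℂ) ^ j * D x) := by
      intro x
      rw [expRem, sub_mul, Finset.sum_mul]
      congr 1
      · rw [mul_comm]; congr 2; push_cast; ring
      · refine Finset.sum_congr rfl fun j _ => ?_
        push_cast; rw [mul_pow, mul_pow]; ring
    simp_rw [he]
    rw [integral_sub, integral_finsetSum _ fun j hj => (hmom j hj).const_mul _]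
    · congr 1
      refine Finset.sum_congr rfl fun j _ => ?_
      rw [integral_const_mul, hc]; ring
    · refine hDint.mul_bdd (c := 1) (Continuous.aestronglyMeasurable (by fun_prop)) ?_
      refine Eventually.of_forall fun x => ?_
      rw [show -(I * ((-ω : ℝ) : ℂ) * (x : ℂ)) = I * (ω : ℂ) * (x : ℂ) by push_cast; ring,
        norm_exp_I_mul]
    · exact integrable_finsetSum _ fun j hj => (hmom j hj).const_mul _
  -- The subtracted polynomial is `FT D (-ω)` minus the remainder integral, both `O(ω^s)` with
  -- `s > k`, the degree.
  have hcz := coeff_eq_zero (k + 1) c (s - k) (M + 2 * ∫ x : ℝ, |x| ^ s * ‖D x‖) (by linarith)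
    (fun ω hω hω1 => by
      have h1 : ∑ j ∈ Finset.range (k + 1), c j * (ω : ℂ) ^ j =
          FT D (-ω) - ∫ x : ℝ, expRem (k + 1) (ω * x) * D x := by rw [hsplit]; ring
      have h2 : ‖∫ x : ℝ, expRem (k + 1) (ω * x) * D x‖ ≤
          2 * ω ^ s * ∫ x : ℝ, |x| ^ s * ‖D x‖ := by
        rw [← integral_const_mul]
        refine norm_integral_le_of_norm_le ((hDi s (by linarith) le_rfl).const_mul _)
          (Eventually.of_forall fun x => ?_)
        rw [norm_mul]
        rcases eq_or_ne x 0 with rfl | hx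
        · rw [mul_zero, expRem_zero_right, norm_zero, zero_mul]; positivity
        · have := norm_expRem_le_rpow k hs.le hsk (mul_ne_zero hω.ne' hx)
          rw [abs_mul, abs_of_pos hω, Real.mul_rpow hω.le (abs_nonneg _)] at this
          calc _ ≤ 2 * (ω ^ s * |x| ^ s) * ‖D x‖ := by gcongr
            _ = _ := by ring
      have h3 : ‖FT D (-ω)‖ ≤ M * ω ^ s := by
        have := hFT (-ω)
        rw [abs_neg, abs_of_pos hω] at this
        exact this.trans (mul_le_mul_of_nonneg_left
          (Real.rpow_le_rpow_of_exponent_ge hω hω1 hsσ) hM)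
      rw [h1, show ((k + 1 : ℕ) : ℝ) - 1 + (s - k) = s by push_cast; ring]
      refine (norm_sub_le _ _).trans ((add_le_add h3 h2).trans (le_of_eq ?_))
      ring)
  rw [hsplit, Finset.sum_eq_zero, sub_zero]
  intro j hj
  rw [hcz j (Finset.mem_range.1 hj), zero_mul]

/-! ### The pairing -/

lemma Iop_eq (a b γ : ℂ) (k : ℕ) (φ : ℝ → ℂ) (x : ℝ) :
    Iop a b γ k φ x = (1 / (2 * (Real.pi : ℂ))) *
      ∫ ω : ℝ, FT φ ω * (expRem k (ω * x) / hab a b γ ω) := by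
  unfold Iop
  congr 2; funext ω
  simp only [expRem]
  congr 3
  · congr 1; push_cast; ring
  · refine Finset.sum_congr rfl fun j _ => ?_
    push_cast; rw [← mul_pow]; congr 2; ring

/-- The right-inverse identity whenever the order `κ = k + 1` satisfies `κ - 1 < Re γ < κ + 1`,
which is all that is used of `κ` being the floor or the ceiling of `Re γ`. -/
lemma rightInverse_weak (a b γ : ℂ) (ha : a ≠ 0) (hb : b ≠ 0) (hγ : 0 < γ.re)
    (k : ℕ) (hk1 : (k : ℝ) < γ.re) (hk2 : γ.re < k + 2) (φ ψ : SchwartzMap ℝ ℂ) :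
    Integrable (fun x : ℝ => Iop a b γ (k + 1) φ x * Dstar a b γ ψ x) ∧
    ∫ x : ℝ, Iop a b γ (k + 1) φ x * Dstar a b γ ψ x = ∫ x : ℝ, φ x * ψ x := by
  obtain ⟨S, hS⟩ := exists_schwartz_FT φ
  obtain ⟨T, hT⟩ := exists_schwartz_FT ψ
  have hk0 : (0 : ℝ) ≤ k := k.cast_nonneg
  -- `s` is the growth exponent of `I φ` and `t` the decay exponent of `D^*ψ`. Integrability in `ω`
  -- near `0` needs `s > Re γ - 1`, integrability in `x` needs `s + 1 < t`, and the Taylor remainder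
  -- of order `k + 1` is `O(|y|^s)` for `k ≤ s ≤ k + 1`.
  obtain ⟨s, hs1, hs2⟩ : ∃ s, max (k : ℝ) (γ.re - 1) < s ∧ s < min (k + 1 : ℝ) γ.re :=
    exists_between (by rw [max_lt_iff, lt_min_iff, lt_min_iff]; constructor <;> constructor <;>
      linarith)
  rw [max_lt_iff] at hs1
  rw [lt_min_iff] at hs2
  obtain ⟨t, ht1, ht2⟩ : ∃ t, s + 1 < t ∧ t < γ.re + 1 := exists_between (by linarith)
  obtain ⟨C, hC, hdec⟩ := Dstar_decay a b hγ ψ (t := t) (by linarith) (by linarith)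
  set D : ℝ → ℂ := Dstar a b γ ψ with hD
  have hDc : Continuous D := continuous_Dstar a b hγ ψ
  have hDi : ∀ r : ℝ, 0 ≤ r → r ≤ s → Integrable fun x : ℝ => |x| ^ r * ‖D x‖ := fun r hr hrs =>
    integrable_abs_rpow_mul_of_decay hDc hdec hr (by linarith)
  have hDint : Integrable D := by
    rw [← integrable_norm_iff hDc.aestronglyMeasurable]
    simpa using hDi 0 le_rfl (by linarith)
  have hFT : ∀ ω, FT D ω = T ω * hab a b γ (-ω) :=
    FT_inverse (T.continuous.mul ((continuous_hab a b hγ).comp continuous_neg))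
      (integrable_symbol a b hγ T) hDint (fun x => by simp only [hD, Dstar, hT])
  obtain ⟨B, hB⟩ : ∃ B, ∀ ω, ‖T ω‖ ≤ B :=
    ⟨_, fun ω => T.norm_le_seminorm ℝ ω⟩
  have hB0 : 0 ≤ B := (norm_nonneg _).trans (hB 0)
  have hinner : ∀ ω : ℝ, ∫ x : ℝ, expRem (k + 1) (ω * x) * D x = T (-ω) * hab a b γ ω := by
    intro ω
    rw [integral_mul_expRem hDc k hs1.1 hs2.1.le hs2.2.le hDi
      (M := B * (‖a‖ + ‖b‖)) (by positivity) (fun ω => ?_), hFT, neg_neg]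
    rw [hFT, norm_mul, mul_assoc]
    have := norm_hab_le a b (γ := γ) (-ω)
    rw [abs_neg] at this
    gcongr
    exact hB ω
  set K : ℝ → ℝ → ℂ := fun x ω => FT φ ω * (expRem (k + 1) (ω * x) / hab a b γ ω) * D x with hK
  have hKi : Integrable (Function.uncurry K) (volume.prod volume) := by
    have h1 := (hDi s (by linarith) le_rfl).mul_prod
      ((integrable_norm_mul_abs_rpow S (ρ := s - γ.re) (by linarith)).const_mul
        (2 * (‖a‖⁻¹ + ‖b‖⁻¹)))
    refine h1.mono' ?_ (Eventually.of_forall fun p => ?_)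
    · have m1 : Measurable (hab a b γ) := (continuous_hab a b hγ).measurable
      have m2 : Measurable (expRem (k + 1)) := (continuous_expRem _).measurable
      have m3 : Measurable S := S.continuous.measurable
      have m4 : Measurable D := hDc.measurable
      have : Measurable (Function.uncurry K) := by
        simp only [hK, ← hS, Function.uncurry_def]
        fun_prop
      exact this.aestronglyMeasurable
    · obtain ⟨x, ω⟩ := p
      simp only [Function.uncurry_apply_pair, hK, ← hS, div_eq_mul_inv, norm_mul]
      rcases eq_or_ne ω 0 with rfl | hω
      · rw [hab_zero, inv_zero, norm_zero, mul_zero, mul_zero, zero_mul]; positivity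
      rcases eq_or_ne x 0 with rfl | hx
      · rw [mul_zero, expRem_zero_right, norm_zero, zero_mul, mul_zero, zero_mul]; positivity
      have h2 := norm_expRem_le_rpow k hs1.1.le hs2.1.le (mul_ne_zero hω hx)
      rw [abs_mul, Real.mul_rpow (abs_nonneg _) (abs_nonneg _)] at h2
      have h3 := norm_hab_inv_le a b γ ω
      rw [sub_eq_add_neg, Real.rpow_add (abs_pos.2 hω)]
      calc _ ≤ ‖S ω‖ * ((2 * (|ω| ^ s * |x| ^ s)) * ((‖a‖⁻¹ + ‖b‖⁻¹) * |ω| ^ (-γ.re))) * ‖D x‖ := by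
            gcongr
        _ = _ := by ring
  have hprod : ∀ x, Iop a b γ (k + 1) φ x * D x = (1 / (2 * (Real.pi : ℂ))) * ∫ ω : ℝ, K x ω := by
    intro x
    rw [Iop_eq, hK, integral_mul_const, mul_assoc]
  simp_rw [hprod]
  refine ⟨hKi.integral_prod_left.const_mul _, ?_⟩
  rw [integral_const_mul, integral_integral_swap hKi, ← FT_parseval]
  congr 1
  refine integral_congr_ae ?_
  filter_upwards [Measure.ae_ne volume (0 : ℝ)] with ω hω
  have h0 := hab_ne_zero γ ha hb hω
  have : ∀ x, K x ω = FT φ ω / hab a b γ ω * (expRem (k + 1) (ω * x) * D x) := by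
    intro x; simp only [hK]; ring
  simp_rw [this]
  rw [integral_const_mul, hinner, hT]
  field_simp

end

/-- weak form of the right-inverse property
`∫ (I_{a,b}^{γ;k} φ)·(D^*ψ) = ∫ φ·ψ` when `k = ⌊Re γ⌋` or `k = ⌈Re γ⌉`. -/
theorem statement6 (a b γ : ℂ) (ha : a ≠ 0) (hb : b ≠ 0) (hγ : 0 < γ.re)
    (k : ℕ) (hk1 : 1 ≤ k) (hk : (k : ℤ) = ⌊γ.re⌋ ∨ (k : ℤ) = ⌈γ.re⌉)
    (φ ψ : SchwartzMap ℝ ℂ) :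
    Integrable (fun x : ℝ => Iop a b γ k ⇑φ x * Dstar a b γ ⇑ψ x) ∧
    Integrable (fun x : ℝ => φ x * ψ x) ∧
    ∫ x : ℝ, Iop a b γ k ⇑φ x * Dstar a b γ ⇑ψ x = ∫ x : ℝ, φ x * ψ x := by
  have hrange : (k : ℝ) - 1 < γ.re ∧ γ.re < k + 1 := by
    rcases hk with h | h
    · have h1 := Int.floor_le γ.re
      have h2 := Int.lt_floor_add_one γ.re
      rw [← h] at h1 h2
      push_cast at h1 h2
      constructor <;> linarith
    · have h1 := Int.le_ceil γ.re
      have h2 := Int.ceil_lt_add_one γ.re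
      rw [← h] at h1 h2
      push_cast at h1 h2
      constructor <;> linarith
  obtain ⟨m, rfl⟩ : ∃ m, k = m + 1 := ⟨k - 1, by omega⟩
  push_cast at hrange
  obtain ⟨h1, h2⟩ := rightInverse_weak a b γ ha hb hγ m (by linarith [hrange.1])
    (by linarith [hrange.2]) φ ψ
  refine ⟨h1, ?_, h2⟩
  exact φ.integrable.mul_bdd ψ.continuous.aestronglyMeasurable
    (Filter.Eventually.of_forall fun x => ψ.norm_le_seminorm ℝ x)
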